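/- For every integer k ≥ 2, cov(𝔐_k) ≤ cov(𝔐_{k²}); that is, the covering number of the Mycielski ideal on k^ω is at most the covering number of the Mycielski ideal on (k²)^ω. -/

import Mathlib

/-!
Code a point `f ∈ k^ω` by the point `Φ f ∈ (k × k)^(ω × ω)`, `Φ f (a, b) = (f a, f b)`, where
`ω × ω` is identified with `ω` and `k × k` with `k²`. If `Y = {y₀, y₁, …}` is infinite, the pairs
`(y₀, y₁), (y₂, y₃), …` are pairwise disjoint, so *every* function from the set `X` of these pairs
to `k × k` has the form `Φ f ↾ X`, and `Φ f ↾ X` depends only on `f ↾ Y`. Hence, if the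
`Φ`-preimage of `A` restricts onto `k^Y`, then `A` restricts onto `(k²)^X`: preimages of sets in
`𝔐_{k²}` lie in `𝔐_k` (`preimage_pairCode_mem_Mycielski`), and a cover of `(k²)^ω` pulls back to
a cover of `k^ω` of no larger cardinality.
-/

open Cardinal

/-- The set of restrictions to `X` of members of `A`. -/
def restrictSet {k : ℕ} (A : Set (ℕ → Fin k)) (X : Set ℕ) : Set (↥X → Fin k) :=
  {g | ∃ f ∈ A, ∀ x : X, f ↑x = g x}

/-- The Mycielski ideal `𝔐ₖ`: all `A ⊆ k^ω` such that for every infinite `X ⊆ ω`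
the set of restrictions of members of `A` to `X` is not all of `X → k`. -/
def Mycielski (k : ℕ) : Set (Set (ℕ → Fin k)) :=
  {A | ∀ X : Set ℕ, X.Infinite → restrictSet A X ≠ Set.univ}

/-- The covering number of a family `I` of subsets of `α`: the least cardinality
of a subfamily of `I` whose union is all of `α`. -/
noncomputable def covNum {α : Type} (I : Set (Set α)) : Cardinal :=
  sInf {c : Cardinal | ∃ S : Set (Set α), S ⊆ I ∧ ⋃₀ S = Set.univ ∧ #S = c}

/-- The map `Φ : k^ω → (k²)^ω`, `Φ f (a, b) = (f a, f b)`, with pairs of naturals coded by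
`Nat.pair` and pairs of digits coded by `e`. -/
def pairCode {k : ℕ} (e : Fin k × Fin k ≃ Fin (k ^ 2)) (f : ℕ → Fin k) : ℕ → Fin (k ^ 2) :=
  fun n => e (f n.unpair.1, f n.unpair.2)

theorem preimage_pairCode_mem_Mycielski {k : ℕ} (e : Fin k × Fin k ≃ Fin (k ^ 2))
    {A : Set (ℕ → Fin (k ^ 2))} (hA : A ∈ Mycielski (k ^ 2)) :
    Set.preimage (pairCode e) A ∈ Mycielski k := by
  intro Y hY hfull
  obtain ⟨y, hy, hyY⟩ : ∃ y : ℕ → ℕ, Function.Injective y ∧ ∀ n, y n ∈ Y :=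
    ⟨fun n => hY.natEmbedding Y n, fun a b h => (hY.natEmbedding Y).injective (Subtype.ext h),
      fun n => (hY.natEmbedding Y n).2⟩
  let p : ℕ → ℕ := fun n => Nat.pair (y (2 * n)) (y (2 * n + 1))
  have hp : Function.Injective p := by
    intro a b h
    have := hy (Nat.pair_eq_pair.1 h).1
    omega
  refine hA (Set.range p) (Set.infinite_range_of_injective hp) ?_
  rw [Set.eq_univ_iff_forall] at hfull ⊢
  intro g
  let G : ℕ → Fin k × Fin k := fun n => e.symm (g ⟨p n, n, rfl⟩)
  -- the digits that `f` must take along the enumeration `y` so that `pairCode e f` extends `g`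
  let d : ℕ → Fin k := fun m => if m % 2 = 0 then (G (m / 2)).1 else (G (m / 2)).2
  obtain ⟨f, hfA, hf⟩ := hfull fun x => Function.extend y d (fun _ => (G 0).1) x
  have hfy : ∀ n, f (y n) = d n := fun n =>
    (hf ⟨y n, hyY n⟩).trans (hy.extend_apply _ _ n)
  refine ⟨_, hfA, ?_⟩
  rintro ⟨_, n, rfl⟩
  have h1 : d (2 * n) = (G n).1 := by simp [d]
  have h2 : d (2 * n + 1) = (G n).2 := by
    have h : (2 * n + 1) / 2 = n := by omega
    simp [d, Nat.add_mod, h]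
  simp [pairCode, p, hfy, h1, h2, G]

theorem singleton_mem_Mycielski {k : ℕ} (hk : 2 ≤ k) (f : ℕ → Fin k) :
    {f} ∈ Mycielski k := by
  intro X hX hfull
  obtain ⟨x, hx⟩ := hX.nonempty
  have : Nontrivial (Fin k) := Fin.nontrivial_iff_two_le.2 hk
  obtain ⟨c, hc⟩ := exists_ne (f x)
  obtain ⟨f', hf', h⟩ := Set.eq_univ_iff_forall.1 hfull fun _ => c
  rw [Set.mem_singleton_iff.1 hf'] at h
  exact hc (h ⟨x, hx⟩).symm

/-- For every integer `k ≥ 2`, `cov(𝔐_k) ≤ cov(𝔐_{k²})`. -/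
theorem covNum_Mycielski_le_sq (k : ℕ) (hk : 2 ≤ k) :
    covNum (Mycielski k) ≤ covNum (Mycielski (k ^ 2)) := by
  have e : Fin k × Fin k ≃ Fin (k ^ 2) := finProdFinEquiv.trans (finCongr (sq k).symm)
  -- the infimum over an empty set of cardinals would be `0`, so a cover has to be exhibited
  refine le_csInf ⟨_, Set.range fun f => {f}, ?_, ?_, rfl⟩ ?_
  · rintro _ ⟨f, rfl⟩
    exact singleton_mem_Mycielski (by nlinarith) f
  · exact Set.eq_univ_of_forall fun f => ⟨{f}, ⟨f, rfl⟩, rfl⟩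
  · rintro _ ⟨S, hS, hcov, rfl⟩
    refine le_trans (b := #(Set.image (Set.preimage (pairCode e)) S)) (csInf_le' ⟨_, ?_, ?_, rfl⟩)
      mk_image_le
    · rintro _ ⟨A, hA, rfl⟩
      exact preimage_pairCode_mem_Mycielski e (hS hA)
    · refine Set.eq_univ_of_forall fun f => ?_
      obtain ⟨A, hA, hfA⟩ := Set.eq_univ_iff_forall.1 hcov (pairCode e f)
      exact ⟨_, ⟨A, hA, rfl⟩, hfA⟩
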